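/- Let τ = (−1 − i·√7)/2 and let p = 8 or p = 12. Then the lattice S(p,τ) is generated by the union of two mirror stabilizers: the subgroup of GL(3,ℂ) generated by Stab(m₁) ∪ Stab(m₂) equals S(p,τ), where m₁ is the mirror of the complex reflection R₁ and m₂ = span_ℂ{e₁, R₂·e₃} is the mirror of the complex reflection (R₁·R₂R₃R₂⁻¹)³. -/

import Mathlib

open Matrix

noncomputable section

/-- `u = exp(2πi/(3p))`. -/
def uPar (p : ℕ) : ℂ := Complex.exp (2 * Real.pi * Complex.I / (3 * p))

/-- `α = 2 − u³ − conj(u)³`. -/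
def alphaPar (p : ℕ) : ℂ :=
  2 - uPar p ^ 3 - starRingEnd ℂ (uPar p) ^ 3

/-- `β = (conj(u)² − u)·τ`. -/
def betaPar (p : ℕ) (τ : ℂ) : ℂ := (starRingEnd ℂ (uPar p) ^ 2 - uPar p) * τ

/-- The generator `R₁` of `S(p,τ)`. -/
def R1S (p : ℕ) (τ : ℂ) : Matrix (Fin 3) (Fin 3) ℂ :=
  !![uPar p ^ 2, τ, -(uPar p) * starRingEnd ℂ τ;
     0, starRingEnd ℂ (uPar p), 0;
     0, 0, starRingEnd ℂ (uPar p)]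

/-- The reflection `R₂ = J·R₁·J⁻¹` of `S(p,τ)`. -/
def R2S (p : ℕ) (τ : ℂ) : Matrix (Fin 3) (Fin 3) ℂ :=
  !![starRingEnd ℂ (uPar p), 0, 0;
     -(uPar p) * starRingEnd ℂ τ, uPar p ^ 2, τ;
     0, 0, starRingEnd ℂ (uPar p)]

/-- The reflection `R₃ = J·R₂·J⁻¹` of `S(p,τ)`. -/
def R3S (p : ℕ) (τ : ℂ) : Matrix (Fin 3) (Fin 3) ℂ :=
  !![starRingEnd ℂ (uPar p), 0, 0;
     0, starRingEnd ℂ (uPar p), 0;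
     τ, -(uPar p) * starRingEnd ℂ τ, uPar p ^ 2]

/-- The cyclic permutation matrix `J`. -/
def Jmat : Matrix (Fin 3) (Fin 3) ℂ :=
  !![0, 0, 1; 1, 0, 0; 0, 1, 0]

/-- The linear functional `x ↦ a·x₁ + b·x₂ + c·x₃` on `ℂ³`. -/
def lfun (a b c : ℂ) : (Fin 3 → ℂ) →ₗ[ℂ] ℂ :=
  a • (LinearMap.proj 0 : (Fin 3 → ℂ) →ₗ[ℂ] ℂ) +
    b • (LinearMap.proj 1 : (Fin 3 → ℂ) →ₗ[ℂ] ℂ) +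
    c • (LinearMap.proj 2 : (Fin 3 → ℂ) →ₗ[ℂ] ℂ)

/-- The mirror of `R₁`: `{x ∈ ℂ³ : α·x₁ + β·x₂ + conj(β)·x₃ = 0}`,
the `H`-orthogonal complement of `e₁`. -/
def mirror1 (p : ℕ) (τ : ℂ) : Submodule ℂ (Fin 3 → ℂ) :=
  LinearMap.ker (lfun (alphaPar p) (betaPar p τ) (starRingEnd ℂ (betaPar p τ)))

/-- The stabilizer of a subspace `m` of `ℂ³` inside a subgroup `S` of `GL(3,ℂ)`:
the set of elements of `S` mapping `m` onto itself. -/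
def mirrorStab (S : Subgroup (GL (Fin 3) ℂ)) (m : Submodule ℂ (Fin 3 → ℂ)) :
    Set (GL (Fin 3) ℂ) :=
  {g | g ∈ S ∧ m.map (Matrix.mulVecLin (g : Matrix (Fin 3) (Fin 3) ℂ)) = m}

end

/-!
A complex reflection preserves every subspace containing its root, so `R₁` and
`A := R₂R₃R₂⁻¹`, whose roots are `e₁` and `R₂e₃`, both stabilize `m₂`. The rank-one parts of `R₁`
and `A` satisfy Temperley–Lieb relations, so the braid relation `R₁AR₁ = AR₁A` reduces to a single
scalar identity, which holds when `τ` and its conjugate are the roots of `X² + X + 2`. With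
`P := R₁J` one has `P²R₁P⁻² = R₁AR₁⁻¹`, so the braid relation says exactly that `AP²` commutes with
`R₁`; hence `AP²` stabilizes the eigenspace `m₁` of `R₁`. Therefore the two stabilizers generate
`P²`. The characteristic polynomial of `P` divides `X⁷ - 1`, so `P = P⁸ = (P²)⁴`, whence
`J = R₁⁻¹P` is generated as well.
-/

section Braid

lemma braid_of_temperleyLieb {K A : Type*} [CommRing K] [Ring A] [Algebra K A] {c d s : K}
    {x y : A} (hx : x * x = d • x) (hy : y * y = d • y) (hxy : x * y * x = s • x)
    (hyx : y * x * y = s • y) (hs : c ^ 2 + c * d + s = 0) :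
    (c • 1 + x) * (c • 1 + y) * (c • 1 + x) = (c • 1 + y) * (c • 1 + x) * (c • 1 + y) := by
  simp only [mul_add, add_mul, smul_mul_assoc, mul_smul_comm, one_mul, mul_one, smul_add, hx, hy,
    hxy, hyx]
  linear_combination (norm := module) hs • (x - y)

variable {G : Type*} [Group G]

lemma commute_mul_sq_of_braid {r j a : G}
    (ha : a = j * r * j⁻¹ * (j * (j * r * j⁻¹) * j⁻¹) * (j * r * j⁻¹)⁻¹)
    (hbraid : r * a * r = a * r * a) : Commute (a * (r * j) ^ 2) r := by
  have hconj : (r * j) ^ 2 * r = r * a * r⁻¹ * (r * j) ^ 2 := by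
    rw [ha, sq]
    group
  calc a * (r * j) ^ 2 * r
      = a * r * a * r⁻¹ * (r * j) ^ 2 := by rw [mul_assoc, hconj]; group
    _ = r * (a * (r * j) ^ 2) := by rw [← hbraid]; group

lemma mem_of_mul_sq_mem {H : Subgroup G} {r j a : G} (hr : r ∈ H) (ha : a ∈ H)
    (hsq : a * (r * j) ^ 2 ∈ H) (hpow : (r * j) ^ 7 = 1) : j ∈ H := by
  have hrj : r * j = ((r * j) ^ 2) ^ 4 := by
    rw [← pow_mul, pow_succ _ 7, hpow, one_mul]
  rw [H.mul_mem_cancel_left ha] at hsq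
  rw [← H.mul_mem_cancel_left hr, hrj]
  exact pow_mem hsq 4

end Braid

section Stabilizer

variable {n K : Type*} [Fintype n] [DecidableEq n] [CommRing K]

open scoped Pointwise in
/-- The subgroup of `GL(n, K)` of all matrices mapping the submodule `m` of `Kⁿ` onto itself. -/
def submoduleStabilizer (m : Submodule K (n → K)) : Subgroup (GL n K) :=
  (MulAction.stabilizer (LinearMap.GeneralLinearGroup K (n → K)) m).comap
    GeneralLinearGroup.toLin.toMonoidHom

lemma mem_submoduleStabilizer {g : GL n K} {m : Submodule K (n → K)} :
    g ∈ submoduleStabilizer m ↔ m.map (mulVecLin (g : Matrix n n K)) = m :=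
  Iff.rfl

lemma mem_submoduleStabilizer_of_forall_mem {g : GL n K} {m : Submodule K (n → K)}
    (h : ∀ x, (g : Matrix n n K) *ᵥ x ∈ m ↔ x ∈ m) : g ∈ submoduleStabilizer m := by
  rw [mem_submoduleStabilizer]
  refine le_antisymm (Submodule.map_le_iff_le_comap.mpr fun x hx ↦ (h x).mpr hx) fun x hx ↦ ?_
  have hgx : (g : Matrix n n K) *ᵥ ((g⁻¹ : GL n K) : Matrix n n K) *ᵥ x = x := by
    rw [mulVec_mulVec, g.mul_inv, one_mulVec]
  exact ⟨_, (h _).mp (hgx.symm ▸ hx), hgx⟩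

lemma mem_submoduleStabilizer_eigenspace_of_commute {g h : GL n K} (hgh : Commute g h) (c : K) :
    g ∈ submoduleStabilizer (Module.End.eigenspace (mulVecLin (h : Matrix n n K)) c) := by
  refine mem_submoduleStabilizer_of_forall_mem fun x ↦ ?_
  have hcomm : (h : Matrix n n K) * g = g * h := congrArg Units.val hgh.symm.eq
  have hinj : Function.Injective (g : Matrix n n K).mulVec := mulVec_injective_of_isUnit g.isUnit
  rw [Module.End.mem_eigenspace_iff, Module.End.mem_eigenspace_iff, mulVecLin_apply,
    mulVecLin_apply, mulVec_mulVec, hcomm, ← mulVec_mulVec, ← mulVec_smul, hinj.eq_iff]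

end Stabilizer

section Reflection

variable {n K : Type*} [Fintype n] [DecidableEq n] [CommRing K]

/-- The matrix of `x ↦ c x + φ(x) e`. Up to the scalar `c` this is the complex reflection with
root `e` and mirror `ker φ`; the form `φ` is encoded as a row vector. -/
def reflectionMatrix (c : K) (e φ : n → K) : Matrix n n K :=
  c • 1 + vecMulVec e φ

lemma reflectionMatrix_mulVec (c : K) (e φ x : n → K) :
    reflectionMatrix c e φ *ᵥ x = c • x + (φ ⬝ᵥ x) • e := by
  simp [reflectionMatrix, add_mulVec, smul_mulVec, vecMulVec_mulVec]

lemma mem_submoduleStabilizer_of_root_mem {g : GL n K} {c : K} {e φ : n → K}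
    {m : Submodule K (n → K)} (hg : (g : Matrix n n K) = reflectionMatrix c e φ) (hc : IsUnit c)
    (he : e ∈ m) : g ∈ submoduleStabilizer m := by
  refine mem_submoduleStabilizer_of_forall_mem fun x ↦ ?_
  rw [hg, reflectionMatrix_mulVec, m.add_mem_iff_left (m.smul_mem _ he),
    m.smul_mem_iff_of_isUnit hc]

lemma coe_conj_eq_reflectionMatrix {g h : GL n K} {c : K} {e φ : n → K}
    (hg : (g : Matrix n n K) = reflectionMatrix c e (φ ᵥ* (h : Matrix n n K))) :
    ((h * g * h⁻¹ : GL n K) : Matrix n n K) =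
      reflectionMatrix c ((h : Matrix n n K) *ᵥ e) φ := by
  rw [Units.val_mul, Units.mul_inv_eq_iff_eq_mul, Units.val_mul, hg]
  simp [reflectionMatrix, mul_add, add_mul, mul_vecMulVec, vecMulVec_mul]

lemma reflectionMatrix_braid {c d : K} {e f φ ψ : n → K} (he : φ ⬝ᵥ e = d) (hf : ψ ⬝ᵥ f = d)
    (h : c ^ 2 + c * d + (φ ⬝ᵥ f) * (ψ ⬝ᵥ e) = 0) :
    reflectionMatrix c e φ * reflectionMatrix c f ψ * reflectionMatrix c e φ =
      reflectionMatrix c f ψ * reflectionMatrix c e φ * reflectionMatrix c f ψ := by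
  refine braid_of_temperleyLieb (d := d) ?_ ?_ ?_ ?_ h <;>
    simp only [vecMulVec_mul_vecMulVec, smul_mul_assoc, vecMulVec_smul, smul_smul, he, hf, mul_comm]

lemma mem_eigenspace_reflectionMatrix [IsDomain K] {c : K} {e φ x : n → K} (he : e ≠ 0) :
    x ∈ Module.End.eigenspace (mulVecLin (reflectionMatrix c e φ)) c ↔ φ ⬝ᵥ x = 0 := by
  rw [Module.End.mem_eigenspace_iff, mulVecLin_apply, reflectionMatrix_mulVec, add_eq_left,
    smul_eq_zero_iff_left he]

end Reflection

section Sporadic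

open Polynomial

variable {K : Type*} [CommRing K]

/-- The row vector `φ` of the `k`-th generator `x ↦ v x + φ(x) eₖ` of `S(p, τ)`, with indices
modulo `3`. Here `v` and `σ` stand for the complex conjugates of `u` and `τ`. -/
def sporadicForm (u v τ σ : K) (k : Fin 3) : Fin 3 → K :=
  fun i ↦ ![u ^ 2 - v, τ, -u * σ] (i - k)

/-- The generator `R₁`, `R₂` or `R₃` (for `k = 0, 1, 2`) of `S(p, τ)` over a commutative ring, with
`v` and `σ` in place of the complex conjugates of `u` and `τ`. -/
def sporadicReflection (u v τ σ : K) (k : Fin 3) : Matrix (Fin 3) (Fin 3) K :=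
  reflectionMatrix v (Pi.single k 1) (sporadicForm u v τ σ k)

variable (K) in
/-- The permutation matrix `J` of the cyclic shift `eₖ ↦ eₖ₊₁` over a commutative ring. -/
def cyclicMatrix : Matrix (Fin 3) (Fin 3) K :=
  !![0, 0, 1; 1, 0, 0; 0, 1, 0]

lemma cyclicMatrix_mulVec_single (k : Fin 3) :
    cyclicMatrix K *ᵥ Pi.single k 1 = Pi.single (k + 1) 1 := by
  ext i
  fin_cases k <;> fin_cases i <;> simp [cyclicMatrix]

lemma vecMul_cyclicMatrix (x : Fin 3 → K) : x ᵥ* cyclicMatrix K = fun i ↦ x (i + 1) := by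
  ext i
  fin_cases i <;> simp [cyclicMatrix, vecMul, dotProduct, Fin.sum_univ_three]

lemma sporadicForm_vecMul_cyclicMatrix (u v τ σ : K) (k : Fin 3) :
    sporadicForm u v τ σ (k + 1) ᵥ* cyclicMatrix K = sporadicForm u v τ σ k := by
  rw [vecMul_cyclicMatrix]
  funext i
  simp only [sporadicForm, add_sub_add_right_eq_sub]

variable {u v τ σ : K} {r j : GL (Fin 3) K}

lemma coe_conj_eq_sporadicReflection {k : Fin 3}
    (hr : (r : Matrix (Fin 3) (Fin 3) K) = sporadicReflection u v τ σ k)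
    (hj : (j : Matrix (Fin 3) (Fin 3) K) = cyclicMatrix K) :
    ((j * r * j⁻¹ : GL (Fin 3) K) : Matrix (Fin 3) (Fin 3) K) =
      sporadicReflection u v τ σ (k + 1) := by
  rw [sporadicReflection, ← cyclicMatrix_mulVec_single, ← hj]
  apply coe_conj_eq_reflectionMatrix
  rw [hr, hj, sporadicForm_vecMul_cyclicMatrix, sporadicReflection]

lemma sporadicReflection_zero (u v τ σ : K) :
    sporadicReflection u v τ σ 0 = !![u ^ 2, τ, -u * σ; 0, v, 0; 0, 0, v] := by
  ext a b
  fin_cases a <;> fin_cases b <;>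
    simp [sporadicReflection, reflectionMatrix, sporadicForm, vecMulVec_apply]

lemma sporadicReflection_one (u v τ σ : K) :
    sporadicReflection u v τ σ 1 = !![v, 0, 0; -u * σ, u ^ 2, τ; 0, 0, v] := by
  ext a b
  fin_cases a <;> fin_cases b <;>
    simp [sporadicReflection, reflectionMatrix, sporadicForm, vecMulVec_apply]

lemma sporadicReflection_one_mulVec_single_two (u v τ σ : K) :
    sporadicReflection u v τ σ 1 *ᵥ Pi.single 2 1 = ![0, τ, v] := by
  ext i
  fin_cases i <;> simp [sporadicReflection_one]

lemma charpoly_sporadicReflection_mul_cyclicMatrix (huv : u * v = 1) :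
    (sporadicReflection u v τ σ 0 * cyclicMatrix K).charpoly =
      X ^ 3 - C τ * X ^ 2 + C σ * X - 1 := by
  have hprod : sporadicReflection u v τ σ 0 * cyclicMatrix K =
      !![τ, -u * σ, u ^ 2; v, 0, 0; 0, v, 0] := by
    simp [sporadicReflection_zero, cyclicMatrix]
  have hCuv : C u * C v = 1 := by rw [← C_mul, huv, C_1]
  simp only [Matrix.charpoly, charmatrix, scalar_apply, hprod, RingHom.mapMatrix_apply,
    det_fin_three, Matrix.sub_apply, map_apply, diagonal_apply_eq, diagonal_apply_ne, ne_eq,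
    Fin.isValue, Fin.reduceEq, not_false_eq_true, zero_ne_one, one_ne_zero, of_apply, cons_val',
    cons_val, cons_val_zero, cons_val_one, cons_val_fin_one, map_zero, map_neg, map_mul, map_pow]
  grind

lemma pow_seven_eq_one_of_charpoly {A : Matrix (Fin 3) (Fin 3) K} (hadd : τ + σ = -1)
    (hmul : τ * σ = 2) (hA : A.charpoly = X ^ 3 - C τ * X ^ 2 + C σ * X - 1) : A ^ 7 = 1 := by
  have hCadd : C τ + C σ = -1 := by rw [← C_add, hadd, C_neg, C_1]
  have hCmul : C τ * C σ = 2 := by rw [← C_mul, hmul, C_ofNat]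
  have hfactor : X ^ 7 - 1 = A.charpoly * ((X ^ 3 - C σ * X ^ 2 + C τ * X - 1) * (X - 1)) := by
    rw [hA]
    grind
  have haeval := congrArg (aeval A) hfactor
  rw [map_mul, aeval_self_charpoly, zero_mul] at haeval
  simpa [sub_eq_zero] using haeval

/-- The form `φ` of the reflection `R₂R₃R₂⁻¹ : x ↦ v x + φ(x) R₂e₃`, as a row vector. -/
def conjReflectionForm (u v σ : K) : Fin 3 → K :=
  ![u, -v * σ, u ^ 3 + 1]

lemma conjReflectionForm_vecMul_sporadicReflection_one (huv : u * v = 1) (hadd : τ + σ = -1)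
    (hmul : τ * σ = 2) :
    conjReflectionForm u v σ ᵥ* sporadicReflection u v τ σ 1 = sporadicForm u v τ σ 2 := by
  ext i
  fin_cases i <;>
    simp [sporadicReflection_one, conjReflectionForm, sporadicForm, vecMul, dotProduct,
      Fin.sum_univ_three] <;> grind

lemma coe_conj_eq_reflectionMatrix_conjReflectionForm {r₂ r₃ : GL (Fin 3) K} (huv : u * v = 1)
    (hadd : τ + σ = -1) (hmul : τ * σ = 2)
    (hr₂ : (r₂ : Matrix (Fin 3) (Fin 3) K) = sporadicReflection u v τ σ 1)
    (hr₃ : (r₃ : Matrix (Fin 3) (Fin 3) K) = sporadicReflection u v τ σ 2) :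
    ((r₂ * r₃ * r₂⁻¹ : GL (Fin 3) K) : Matrix (Fin 3) (Fin 3) K) =
      reflectionMatrix v ((r₂ : Matrix (Fin 3) (Fin 3) K) *ᵥ Pi.single 2 1)
        (conjReflectionForm u v σ) := by
  apply coe_conj_eq_reflectionMatrix
  rw [hr₂, hr₃, conjReflectionForm_vecMul_sporadicReflection_one huv hadd hmul, sporadicReflection]

lemma sporadicReflection_braid {r₂ r₃ : GL (Fin 3) K} (huv : u * v = 1) (hadd : τ + σ = -1)
    (hmul : τ * σ = 2) (hr : (r : Matrix (Fin 3) (Fin 3) K) = sporadicReflection u v τ σ 0)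
    (hr₂ : (r₂ : Matrix (Fin 3) (Fin 3) K) = sporadicReflection u v τ σ 1)
    (hr₃ : (r₃ : Matrix (Fin 3) (Fin 3) K) = sporadicReflection u v τ σ 2) :
    r * (r₂ * r₃ * r₂⁻¹) * r = r₂ * r₃ * r₂⁻¹ * r * (r₂ * r₃ * r₂⁻¹) := by
  have ha := coe_conj_eq_reflectionMatrix_conjReflectionForm huv hadd hmul hr₂ hr₃
  rw [hr₂, sporadicReflection_one_mulVec_single_two] at ha
  generalize r₂ * r₃ * r₂⁻¹ = a at ha ⊢
  ext1
  simp only [Units.val_mul, ha, hr, sporadicReflection]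
  apply reflectionMatrix_braid (d := u ^ 2 - v) <;>
    simp [sporadicForm, conjReflectionForm, dotProduct, Fin.sum_univ_three] <;> grind

lemma mul_cyclic_pow_seven_eq_one (huv : u * v = 1) (hadd : τ + σ = -1) (hmul : τ * σ = 2)
    (hr : (r : Matrix (Fin 3) (Fin 3) K) = sporadicReflection u v τ σ 0)
    (hj : (j : Matrix (Fin 3) (Fin 3) K) = cyclicMatrix K) : (r * j) ^ 7 = 1 := by
  ext1
  rw [Units.val_pow_eq_pow_val, Units.val_mul, hr, hj, Units.val_one]
  exact pow_seven_eq_one_of_charpoly hadd hmul (charpoly_sporadicReflection_mul_cyclicMatrix huv)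

end Sporadic

theorem stmt12_general {K : Type*} [CommRing K] {u v τ σ : K} {r j : GL (Fin 3) K}
    (huv : u * v = 1) (hadd : τ + σ = -1) (hmul : τ * σ = 2)
    (hr : (r : Matrix (Fin 3) (Fin 3) K) = sporadicReflection u v τ σ 0)
    (hj : (j : Matrix (Fin 3) (Fin 3) K) = cyclicMatrix K) :
    Subgroup.closure {r, j} ⊓ submoduleStabilizer
        (Module.End.eigenspace (mulVecLin (r : Matrix (Fin 3) (Fin 3) K)) v) ⊔
      Subgroup.closure {r, j} ⊓ submoduleStabilizer
        (Submodule.span K {Pi.single 0 1,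
          ((j * r * j⁻¹ : GL (Fin 3) K) : Matrix (Fin 3) (Fin 3) K) *ᵥ Pi.single 2 1}) =
      Subgroup.closure {r, j} := by
  set S := Subgroup.closure {r, j}
  set H := S ⊓ _ ⊔ S ⊓ _
  set r₂ := j * r * j⁻¹
  set a := r₂ * (j * r₂ * j⁻¹) * r₂⁻¹ with ha
  have hr₂ := coe_conj_eq_sporadicReflection hr hj
  have hr₃ := coe_conj_eq_sporadicReflection hr₂ hj
  have ha_coe := coe_conj_eq_reflectionMatrix_conjReflectionForm huv hadd hmul hr₂ hr₃
  have hcomm := commute_mul_sq_of_braid ha (sporadicReflection_braid huv hadd hmul hr hr₂ hr₃)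
  have hv : IsUnit v := .of_mul_eq_one_right u huv
  have hrS : r ∈ S := Subgroup.subset_closure (.inl rfl)
  have hjS : j ∈ S := Subgroup.subset_closure (.inr rfl)
  have hr₂S : r₂ ∈ S := mul_mem (mul_mem hjS hrS) (inv_mem hjS)
  have haS : a ∈ S := mul_mem (mul_mem hr₂S (mul_mem (mul_mem hjS hr₂S) (inv_mem hjS)))
    (inv_mem hr₂S)
  have hrH : r ∈ H := Subgroup.mem_sup_right
    ⟨hrS, mem_submoduleStabilizer_of_root_mem hr hv (Submodule.subset_span (.inl rfl))⟩
  have haH : a ∈ H := Subgroup.mem_sup_right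
    ⟨haS, mem_submoduleStabilizer_of_root_mem ha_coe hv (Submodule.subset_span (.inr rfl))⟩
  have hsqH : a * (r * j) ^ 2 ∈ H := Subgroup.mem_sup_left
    ⟨mul_mem haS (pow_mem (mul_mem hrS hjS) 2),
      mem_submoduleStabilizer_eigenspace_of_commute hcomm v⟩
  have hjH : j ∈ H :=
    mem_of_mul_sq_mem hrH haH hsqH (mul_cyclic_pow_seven_eq_one huv hadd hmul hr hj)
  refine le_antisymm (sup_le inf_le_left inf_le_left) ((Subgroup.closure_le H).mpr ?_)
  rintro g (rfl | rfl)
  exacts [hrH, hjH]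

section Lattice

lemma uPar_mul_conj (p : ℕ) : uPar p * starRingEnd ℂ (uPar p) = 1 := by
  have hexp : (2 * Real.pi * Complex.I / (3 * p) : ℂ) =
      ((2 * Real.pi / (3 * p) : ℝ) : ℂ) * Complex.I := by
    push_cast
    ring
  rw [Complex.mul_conj', uPar, hexp, Complex.norm_exp_ofReal_mul_I, Complex.ofReal_one, one_pow]

lemma uPar_pow_three_ne_one {p : ℕ} (hp : 1 < p) : uPar p ^ 3 ≠ 1 := by
  have hpow : uPar p ^ 3 = Complex.exp (2 * Real.pi * Complex.I / p) := by
    rw [uPar, ← Complex.exp_nat_mul]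
    congr 1
    push_cast
    field_simp
  rw [hpow]
  exact (Complex.isPrimitiveRoot_exp p (by lia)).ne_one hp

lemma R1S_eq_sporadicReflection (p : ℕ) (τ : ℂ) :
    R1S p τ = sporadicReflection (uPar p) (starRingEnd ℂ (uPar p)) τ (starRingEnd ℂ τ) 0 :=
  (sporadicReflection_zero ..).symm

lemma R2S_eq_sporadicReflection (p : ℕ) (τ : ℂ) :
    R2S p τ = sporadicReflection (uPar p) (starRingEnd ℂ (uPar p)) τ (starRingEnd ℂ τ) 1 :=
  (sporadicReflection_one ..).symm

lemma mirror1_eq_eigenspace {p : ℕ} (hp : 1 < p) (τ : ℂ) :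
    mirror1 p τ =
      Module.End.eigenspace (mulVecLin (R1S p τ)) (starRingEnd ℂ (uPar p)) := by
  ext x
  have huv := uPar_mul_conj p
  have hu : 1 - uPar p ^ 3 ≠ 0 := sub_ne_zero.mpr (uPar_pow_three_ne_one hp).symm
  have hv : starRingEnd ℂ (uPar p) ≠ 0 := right_ne_zero_of_mul_eq_one huv
  have hform : lfun (alphaPar p) (betaPar p τ) (starRingEnd ℂ (betaPar p τ)) x =
      starRingEnd ℂ (uPar p) ^ 2 * (1 - uPar p ^ 3) *
        (sporadicForm (uPar p) (starRingEnd ℂ (uPar p)) τ (starRingEnd ℂ τ) 0 ⬝ᵥ x) := by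
    simp only [lfun, alphaPar, betaPar, map_mul, map_sub, map_pow, Complex.conj_conj,
      LinearMap.add_apply, LinearMap.smul_apply, LinearMap.proj_apply, smul_eq_mul, dotProduct,
      sporadicForm, Fin.isValue, sub_zero, Fin.sum_univ_three, cons_val_zero, cons_val_one,
      cons_val]
    grind
  rw [R1S_eq_sporadicReflection, sporadicReflection, mem_eigenspace_reflectionMatrix (by simp),
    mirror1, LinearMap.mem_ker, hform,
    mul_eq_zero_iff_left (mul_ne_zero (pow_ne_zero 2 hv) hu)]

lemma mirrorStab_eq_coe_inf (S : Subgroup (GL (Fin 3) ℂ)) (m : Submodule ℂ (Fin 3 → ℂ)) :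
    mirrorStab S m = (S ⊓ submoduleStabilizer m : Subgroup (GL (Fin 3) ℂ)) := by
  ext g
  rw [SetLike.mem_coe, Subgroup.mem_inf, mem_submoduleStabilizer]
  rfl

lemma closure_mirrorStab_union (S : Subgroup (GL (Fin 3) ℂ)) (m m' : Submodule ℂ (Fin 3 → ℂ)) :
    Subgroup.closure (mirrorStab S m ∪ mirrorStab S m') =
      S ⊓ submoduleStabilizer m ⊔ S ⊓ submoduleStabilizer m' := by
  rw [Subgroup.sup_eq_closure, mirrorStab_eq_coe_inf, mirrorStab_eq_coe_inf]

lemma add_conj_eq_neg_one {τ : ℂ} (hτ : τ = (-1 - Complex.I * Real.sqrt 7) / 2) :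
    τ + starRingEnd ℂ τ = -1 := by
  rw [Complex.add_conj, hτ]
  norm_num

lemma mul_conj_eq_two {τ : ℂ} (hτ : τ = (-1 - Complex.I * Real.sqrt 7) / 2) :
    τ * starRingEnd ℂ τ = 2 := by
  have hre : τ.re = -1 / 2 := by simp [hτ]
  have him : τ.im = -√7 / 2 := by simp [hτ]
  have hnorm : Complex.normSq τ = 2 := by
    rw [Complex.normSq_apply, hre, him]
    linear_combination Real.sq_sqrt (show (0 : ℝ) ≤ 7 by norm_num) / 4
  rw [Complex.mul_conj, hnorm, Complex.ofReal_ofNat]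

end Lattice

/-- For `τ = (−1−i√7)/2` and `p = 8` or `12`, the lattice `S(p,τ)` is generated by
the union of the stabilizers of the mirror of `R₁` and of the mirror
`span{e₁, R₂·e₃}` of the complex reflection `(R₁·R₂R₃R₂⁻¹)³`. -/
theorem stmt12 (p : ℕ) (hp : p = 8 ∨ p = 12)
    (τ : ℂ) (hτ : τ = (-1 - Complex.I * Real.sqrt 7) / 2)
    (r₁ j : GL (Fin 3) ℂ)
    (hr₁ : (↑r₁ : Matrix (Fin 3) (Fin 3) ℂ) = R1S p τ)
    (hj : (↑j : Matrix (Fin 3) (Fin 3) ℂ) = Jmat) :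
    Subgroup.closure
        (mirrorStab (Subgroup.closure {r₁, j}) (mirror1 p τ) ∪
          mirrorStab (Subgroup.closure {r₁, j})
            (Submodule.span ℂ
              {Pi.single 0 1, (R2S p τ).mulVec (Pi.single 2 1)})) =
      Subgroup.closure {r₁, j} := by
  have hp' : 1 < p := by lia
  have hr := hr₁.trans (R1S_eq_sporadicReflection p τ)
  have hr₂ : R2S p τ = (j * r₁ * j⁻¹ : GL (Fin 3) ℂ) :=
    (R2S_eq_sporadicReflection p τ).trans (coe_conj_eq_sporadicReflection hr hj).symm
  rw [closure_mirrorStab_union, mirror1_eq_eigenspace hp', ← hr₁, hr₂]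
  exact stmt12_general (uPar_mul_conj p) (add_conj_eq_neg_one hτ) (mul_conj_eq_two hτ) hr hj
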